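/- arXiv:2111.13245 — 4 statements merged into one kernel-verified Lean document; each statement's English description precedes it below -/
import Mathlib

section
/- The function Φ satisfies the one-dimensional heat equation pointwise, ∂ₜΦ(t,x) = ∂ₓₓΦ(t,x) for all (t,x) ∈ (0,∞) × ℝ, and Φ is 2π-periodic in the space variable: Φ(t, x + 2π) = Φ(t,x) for all t > 0 and x ∈ ℝ. -/
open MeasureTheory Real Filter

/-- The one-dimensional periodic heat kernel
`Φ(t,x) = 1/(2π) + (1/π)·∑_{n=1}^∞ exp(−n²t)·cos(nx)`. -/
noncomputable def Φ (t x : ℝ) : ℝ :=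
  1 / (2 * π) + (1 / π) * ∑' n : ℕ, Real.exp (-((n : ℝ) + 1) ^ 2 * t) * Real.cos (((n : ℝ) + 1) * x)

/-!
Each term `exp (-ω² t) cos (ω x)` solves the heat equation, both derivatives multiplying it by
`-ω²`. Termwise differentiation is legitimate because the damping absorbs powers of `ω`: since
`|ω| ≤ C(t) exp (ω² t / 2)`, a series of amplitudes that is summable after damping for
every positive time stays so when each amplitude is multiplied by its frequency.
-/

lemma abs_le_inv_sqrt_mul_exp_mul_sq {s : ℝ} (hs : 0 < s) (x : ℝ) :
    |x| ≤ (√s)⁻¹ * exp (s * x ^ 2) := by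
  have two_mul_le : 2 * (√s * |x|) ≤ 1 + s * x ^ 2 := by
    simpa [mul_pow, sq_sqrt hs.le, mul_assoc] using two_mul_le_add_sq 1 (√s * |x|)
  have sqrt_mul_le : √s * |x| ≤ exp (s * x ^ 2) := by
    linarith [add_one_le_exp (s * x ^ 2), mul_nonneg (sqrt_nonneg s) (abs_nonneg x)]
  rwa [inv_mul_eq_div, le_div_iff₀' (sqrt_pos.2 hs)]

section HeatSeries

variable {ι E : Type*} [NormedAddCommGroup E] [NormedSpace ℝ E]
  {a ω : ι → ℝ} {f f' : ℝ → E} {t K : ℝ}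

/-- The superposition `∑ᵢ aᵢ exp(−ωᵢ²t) f(ωᵢx)` of dilates of a profile `f`, each damped at the
rate dictated by the heat equation when `f'' = −f`. -/
noncomputable def heatSeries (f : ℝ → E) (a ω : ι → ℝ) (t x : ℝ) : E :=
  ∑' i, (a i * exp (-ω i ^ 2 * t)) • f (ω i * x)

/-- The amplitudes `a` at the frequencies `ω` are summable after heat damping for any positive
time. This is the condition under which `heatSeries` may be differentiated termwise for `t > 0`. -/
def HeatSummable (a ω : ι → ℝ) : Prop :=
  ∀ ⦃t : ℝ⦄, 0 < t → Summable fun i => a i * exp (-ω i ^ 2 * t)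

lemma HeatSummable.mul_frequency (h : HeatSummable a ω) : HeatSummable (ω * a) ω := by
  intro t ht
  refine .of_norm_bounded ((h (half_pos ht)).norm.mul_left (√(t / 2))⁻¹) fun i => ?_
  calc ‖(ω * a) i * exp (-ω i ^ 2 * t)‖
      = |ω i| * (|a i| * exp (-ω i ^ 2 * t)) := by simp [mul_assoc]
    _ ≤ (√(t / 2))⁻¹ * exp (t / 2 * ω i ^ 2) * (|a i| * exp (-ω i ^ 2 * t)) := by
        gcongr
        exact abs_le_inv_sqrt_mul_exp_mul_sq (half_pos ht) (ω i)
    _ = (√(t / 2))⁻¹ * (|a i| * (exp (t / 2 * ω i ^ 2) * exp (-ω i ^ 2 * t))) := by ring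
    _ = (√(t / 2))⁻¹ * ‖a i * exp (-ω i ^ 2 * (t / 2))‖ := by
        rw [← exp_add, norm_mul, norm_eq_abs, norm_eq_abs, abs_exp]
        ring_nf

lemma heatSeries_periodic {T : ℝ} (hf : Function.Periodic f T) (hω : ∀ i, ∃ m : ℤ, ω i = m) :
    Function.Periodic (heatSeries f a ω t) T := by
  intro x
  refine tsum_congr fun i => ?_
  obtain ⟨m, hm⟩ := hω i
  rw [mul_add, hm, hf.int_mul m]

lemma heatSeries_neg (f : ℝ → E) (a ω : ι → ℝ) (t x : ℝ) :
    heatSeries (-f) a ω t x = -heatSeries f a ω t x := by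
  simp [heatSeries, tsum_neg]

variable [CompleteSpace E]

lemma hasDerivAt_heatSeries_space (h : HeatSummable a ω) (hf : ∀ x, HasDerivAt f (f' x) x)
    (hK : ∀ x, ‖f' x‖ ≤ K) (ht : 0 < t) (x : ℝ) :
    HasDerivAt (heatSeries f a ω t) (heatSeries f' (ω * a) ω t x) x := by
  refine hasDerivAt_tsum ((h.mul_frequency ht).norm.mul_right K)
    (g' := fun i y => ((ω * a) i * exp (-ω i ^ 2 * t)) • f' (ω i * y)) (y₀ := 0)
    (fun i y => ?_) (fun i y => ?_) ?_ x
  · have dilate : HasDerivAt (fun y => f (ω i * y)) (ω i • f' (ω i * y)) y := by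
      simpa [Function.comp_def] using (hf (ω i * y)).scomp y ((hasDerivAt_id y).const_mul (ω i))
    refine (dilate.const_smul (a i * exp (-ω i ^ 2 * t))).congr_deriv ?_
    rw [smul_smul, Pi.mul_apply]
    ring_nf
  · rw [norm_smul]
    gcongr
    exact hK _
  · simpa using (h ht).smul_const (f 0)

lemma hasDerivAt_heatSeries_time (h : HeatSummable a ω) (hK : ∀ x, ‖f x‖ ≤ K) (ht : 0 < t)
    (x : ℝ) :
    HasDerivAt (fun s => heatSeries f a ω s x) (-heatSeries f (ω * (ω * a)) ω t x) t := by
  have summable_at : Summable fun i => (a i * exp (-ω i ^ 2 * t)) • f (ω i * x) :=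
    .of_norm_bounded ((h ht).norm.mul_right K) fun i => by
      rw [norm_smul]
      gcongr
      exact hK _
  rw [← heatSeries_neg]
  -- For `s > t / 2` the differentiated terms are dominated by their damping at time `t / 2`.
  refine hasDerivAt_tsum_of_isPreconnected (t := Set.Ioi (t / 2))
    ((h.mul_frequency.mul_frequency (half_pos ht)).norm.mul_right K) isOpen_Ioi isPreconnected_Ioi
    (g' := fun i s => ((ω * (ω * a)) i * exp (-ω i ^ 2 * s)) • (-f) (ω i * x))
    (fun i s _ => ?_) (fun i s hs => ?_) (half_lt_self ht) summable_at (half_lt_self ht)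
  · have decay : HasDerivAt (fun s => exp (-ω i ^ 2 * s)) (exp (-ω i ^ 2 * s) * -ω i ^ 2) s := by
      simpa using ((hasDerivAt_id s).const_mul (-ω i ^ 2)).exp
    refine ((decay.const_mul (a i)).smul_const (f (ω i * x))).congr_deriv ?_
    rw [Pi.neg_apply, smul_neg, ← neg_smul, Pi.mul_apply, Pi.mul_apply]
    ring_nf
  · have exp_le : exp (-ω i ^ 2 * s) ≤ exp (-ω i ^ 2 * (t / 2)) :=
      exp_le_exp.2 (mul_le_mul_of_nonpos_left (le_of_lt hs) (neg_nonpos.2 (sq_nonneg _)))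
    simp only [norm_smul, norm_mul, norm_eq_abs, abs_exp, Pi.neg_apply, norm_neg]
    gcongr
    exact hK _

theorem deriv_heatSeries_time_eq_deriv_deriv (h : HeatSummable a ω)
    (hf : ∀ x, HasDerivAt f (f' x) x) (hf' : ∀ x, HasDerivAt f' (-f x) x)
    (hK : ∀ x, ‖f x‖ ≤ K) {K' : ℝ} (hK' : ∀ x, ‖f' x‖ ≤ K') (ht : 0 < t) (x : ℝ) :
    deriv (fun s => heatSeries f a ω s x) t = deriv (deriv (heatSeries f a ω t)) x := by
  have deriv_space : deriv (heatSeries f a ω t) = heatSeries f' (ω * a) ω t :=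
    funext fun y => (hasDerivAt_heatSeries_space h hf hK' ht y).deriv
  have deriv_space_space :
      deriv (heatSeries f' (ω * a) ω t) x = heatSeries (-f) (ω * (ω * a)) ω t x :=
    (hasDerivAt_heatSeries_space h.mul_frequency hf' (by simpa using hK) ht x).deriv
  rw [(hasDerivAt_heatSeries_time h hK ht x).deriv, deriv_space, deriv_space_space, heatSeries_neg]

end HeatSeries

lemma heatSummable_one_natCast_add_one :
    HeatSummable (fun _ : ℕ => 1) (fun n : ℕ => (n : ℝ) + 1) := by
  intro t ht
  have le_sq (n : ℕ) : (n : ℝ) ≤ ((n : ℝ) + 1) ^ 2 := by nlinarith [n.cast_nonneg (α := ℝ)]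
  simpa [mul_comm] using summable_exp_nat_mul_of_ge (neg_lt_zero.2 ht) le_sq

lemma Φ_eq_heatSeries (t x : ℝ) :
    Φ t x = 1 / (2 * π) + 1 / π * heatSeries cos (fun _ : ℕ => 1) (fun n => (n : ℝ) + 1) t x := by
  simp [Φ, heatSeries]

/-- `Φ` satisfies the one-dimensional heat equation `∂ₜΦ = ∂ₓₓΦ` pointwise on `(0,∞) × ℝ`
and is `2π`-periodic in the space variable. -/
theorem statement_1 :
    (∀ t x : ℝ, 0 < t →
      deriv (fun s : ℝ => Φ s x) t = deriv (deriv (fun y : ℝ => Φ t y)) x) ∧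
    (∀ t x : ℝ, 0 < t → Φ t (x + 2 * π) = Φ t x) := by
  simp only [Φ_eq_heatSeries]
  refine ⟨fun t x ht => ?_, fun t x _ => ?_⟩
  · simp only [deriv_const_add', deriv_const_mul_field']
    rw [deriv_heatSeries_time_eq_deriv_deriv heatSummable_one_natCast_add_one hasDerivAt_cos
      (fun y => (hasDerivAt_sin y).neg) abs_cos_le_one (by simpa using abs_sin_le_one) ht]
  · rw [heatSeries_periodic cos_periodic fun n : ℕ => ⟨n + 1, by push_cast; rfl⟩]
end

section
/- Φ is nonnegative on (0,∞) × ℝ, i.e. for every t > 0 and every x ∈ ℝ one has 1 + 2·∑_{n=1}^∞ exp(−n²t)·cos(nx) ≥ 0. -/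
open MeasureTheory Real Filter

/-!
The series `1 + 2 ∑ exp(-n²t) cos(nx)` is a Jacobi theta function of `x / (2π)` at time `t / π`.
Its functional equation, which is Poisson summation, turns it into a positive multiple of
`∑ exp(-π(n + x/(2π))² π/t)` over `n ∈ ℤ`: the periodization of a Gaussian, all of whose terms are
positive.
-/

section HurwitzKernels

open HurwitzZeta

lemma evenKernel_pos (a : UnitAddCircle) {t : ℝ} (ht : 0 < t) : 0 < evenKernel a t := by
  induction a using QuotientAddGroup.induction_on with
  | H a =>
    exact (exp_pos _).trans_le <|
      le_hasSum (hasSum_int_evenKernel a ht) 0 fun n _ => (exp_pos (-π * (n + a) ^ 2 * t)).le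

lemma cosKernel_pos (a : UnitAddCircle) {t : ℝ} (ht : 0 < t) : 0 < cosKernel a t := by
  have ht' : 0 < 1 / t := one_div_pos.mpr ht
  have functional_equation :
      evenKernel a (1 / t) = 1 / (1 / t) ^ (1 / 2 : ℝ) * cosKernel a t := by
    simpa only [one_div_one_div] using evenKernel_functional_equation a (1 / t)
  have product_pos := functional_equation ▸ evenKernel_pos a ht'
  exact pos_of_mul_pos_right product_pos (by positivity)

lemma hasSum_exp_neg_sq_mul_cos {t : ℝ} (ht : 0 < t) (x : ℝ) :
    HasSum (fun n : ℕ => exp (-((n : ℝ) + 1) ^ 2 * t) * cos (((n : ℝ) + 1) * x))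
      ((cosKernel ↑(x / (2 * π)) (t / π) - 1) / 2) := by
  refine ((hasSum_nat_cosKernel₀ (x / (2 * π)) (div_pos ht pi_pos)).div_const 2).congr_fun ?_
  intro n
  have phase : 2 * π * (x / (2 * π)) * ((n : ℝ) + 1) = ((n : ℝ) + 1) * x := by field_simp
  have decay : -π * ((n : ℝ) + 1) ^ 2 * (t / π) = -((n : ℝ) + 1) ^ 2 * t := by field_simp
  rw [phase, decay]
  ring

lemma one_add_two_mul_tsum_exp_neg_sq_mul_cos {t : ℝ} (ht : 0 < t) (x : ℝ) :
    1 + 2 * ∑' n : ℕ, exp (-((n : ℝ) + 1) ^ 2 * t) * cos (((n : ℝ) + 1) * x) =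
      cosKernel ↑(x / (2 * π)) (t / π) := by
  rw [(hasSum_exp_neg_sq_mul_cos ht x).tsum_eq]
  ring

end HurwitzKernels

lemma Φ_eq_one_div_two_pi_mul (t x : ℝ) :
    Φ t x = 1 / (2 * π) *
      (1 + 2 * ∑' n : ℕ, exp (-((n : ℝ) + 1) ^ 2 * t) * cos (((n : ℝ) + 1) * x)) := by
  rw [Φ]
  ring

/-- `Φ` is nonnegative on `(0,∞) × ℝ`, i.e. for every `t > 0` and `x ∈ ℝ` one has
`1 + 2·∑_{n=1}^∞ exp(−n²t)·cos(nx) ≥ 0`. -/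
theorem statement_2 :
    ∀ t x : ℝ, 0 < t →
      0 ≤ 1 + 2 * ∑' n : ℕ, Real.exp (-((n : ℝ) + 1) ^ 2 * t) * Real.cos (((n : ℝ) + 1) * x) ∧
      0 ≤ Φ t x := by
  intro t x ht
  have series_nonneg :
      0 ≤ 1 + 2 * ∑' n : ℕ, exp (-((n : ℝ) + 1) ^ 2 * t) * cos (((n : ℝ) + 1) * x) := by
    rw [one_add_two_mul_tsum_exp_neg_sq_mul_cos ht]
    exact (cosKernel_pos _ (div_pos ht pi_pos)).le
  refine ⟨series_nonneg, ?_⟩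
  rw [Φ_eq_one_div_two_pi_mul]
  exact mul_nonneg (by positivity) series_nonneg
end

section
/- If ψ : ℝ → ℝ is twice continuously differentiable and 2π-periodic, then lim_{t→0⁺} ∫₀^{2π} Φ(t,x)·ψ(x) dx = ψ(0); that is, Φ(t,·) converges to the Dirac delta at 0 when tested against 2π-periodic C² functions. -/
open MeasureTheory Real Filter

/-!
Up to rescaling, `Φ t` is the Jacobi theta function `a ↦ ∑ exp (2πina - πn²s)` on `ℝ / ℤ`, which is
`HurwitzZeta.cosKernel` in Mathlib. Poisson summation turns it into a sum of Gaussians, so it is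
nonnegative and is the density of a probability measure on the circle. The `n`-th Fourier
coefficient of this measure is `exp (-πn²s)`, which tends to `1`, the `n`-th Fourier coefficient of
the Dirac mass at `0`, as `s → 0⁺`. Since trigonometric polynomials are dense in the continuous
functions, the measures converge weakly to that Dirac mass.
-/

open HurwitzZeta BoundedContinuousFunction
open scoped Topology

section FourierAnalysis

theorem tendsto_integral_of_mem_span {X 𝕜 : Type*} [TopologicalSpace X] [CompactSpace X]
    [MeasurableSpace X] [OpensMeasurableSpace X] [RCLike 𝕜] {ι : Type*} {l : Filter ι}
    {μ : ι → Measure X} [∀ i, IsFiniteMeasure (μ i)] {ν : Measure X} [IsFiniteMeasure ν]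
    {S : Set C(X, 𝕜)} (hS : ∀ f ∈ S, Tendsto (fun i ↦ ∫ x, f x ∂μ i) l (𝓝 (∫ x, f x ∂ν)))
    {f : C(X, 𝕜)} (hf : f ∈ Submodule.span 𝕜 S) :
    Tendsto (fun i ↦ ∫ x, f x ∂μ i) l (𝓝 (∫ x, f x ∂ν)) := by
  have hint (ρ : Measure X) [IsFiniteMeasure ρ] (f : C(X, 𝕜)) : Integrable f ρ :=
    f.continuous.integrable_of_hasCompactSupport (.of_compactSpace _)
  induction hf using Submodule.span_induction with
  | mem f hf => exact hS f hf
  | zero => simpa using tendsto_const_nhds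
  | add f g _ _ hf hg =>
    simpa only [ContinuousMap.add_apply, integral_add (hint _ f) (hint _ g)] using hf.add hg
  | smul c f _ hf =>
    simpa only [ContinuousMap.smul_apply, integral_smul] using hf.const_smul c

variable {T : ℝ} [Fact (0 < T)]

theorem tendsto_probabilityMeasure_of_tendsto_integral_fourier {ι : Type*} {l : Filter ι}
    {μ : ι → ProbabilityMeasure (AddCircle T)} {ν : ProbabilityMeasure (AddCircle T)}
    (h : ∀ n : ℤ, Tendsto (fun i ↦ ∫ z, fourier n z ∂(μ i : Measure (AddCircle T))) l
      (𝓝 (∫ z, fourier n z ∂(ν : Measure (AddCircle T))))) :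
    Tendsto μ l (𝓝 ν) := by
  refine ProbabilityMeasure.tendsto_of_tight_of_separatesPoints ℂ .of_compactSpace
    (A := fourierSubalgebra.comap (toContinuousMapStarₐ ℂ)) ?_ fun g hg ↦ ?_
  · intro x y hxy
    obtain ⟨_, ⟨f, hf, rfl⟩, hfxy⟩ := fourierSubalgebra_separatesPoints hxy
    exact ⟨f, ⟨f, ⟨mkOfCompact f, hf, rfl⟩, rfl⟩, hfxy⟩
  · have hspan : toContinuousMapStarₐ ℂ g ∈ Submodule.span ℂ (Set.range (@fourier T)) :=
      fourierSubalgebra_coe (T := T) ▸ hg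
    exact tendsto_integral_of_mem_span (Set.forall_mem_range.2 h) hspan

theorem fourierCoeff_eq_of_hasSum {c : ℤ → ℂ} {f : C(AddCircle T, ℂ)}
    (hf : HasSum (fun n ↦ c n • fourier n) f) : fourierCoeff f = c := by
  ext n
  have hinner := (hf.mapL (ContinuousMap.toLp 2 AddCircle.haarAddCircle ℂ)).mapL
    (innerSL ℂ (fourierLp 2 n))
  have hterm (m : ℤ) : innerSL ℂ (fourierLp 2 n) (ContinuousMap.toLp 2 AddCircle.haarAddCircle ℂ
      (c m • @fourier T m)) = if m = n then c n else 0 := by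
    rw [map_smul, map_smul, innerSL_apply_apply,
      orthonormal_iff_ite.mp (orthonormal_fourier (T := T)) n m]
    obtain rfl | hmn := eq_or_ne m n
    · simp
    · simp [hmn, hmn.symm]
  simp only [hterm] at hinner
  rw [← fourierCoeff_toLp, ← fourierBasis_repr, HilbertBasis.repr_apply_apply, coe_fourierBasis]
  exact hinner.unique (hasSum_ite_eq n (c n))

end FourierAnalysis

section CosKernel

-- The functional equation (Poisson summation) exhibits the kernel as a sum of Gaussians.
theorem cosKernel_nonneg (a : UnitAddCircle) (s : ℝ) : 0 ≤ cosKernel a s := by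
  obtain hs | hs := le_or_gt s 0
  · exact (cosKernel_undef a hs).ge
  induction a using QuotientAddGroup.induction_on with | H a =>
  have heven : 0 ≤ evenKernel a (1 / s) :=
    (hasSum_int_evenKernel a (one_div_pos.2 hs)).nonneg fun n ↦ (exp_pos _).le
  rw [evenKernel_functional_equation, one_div_one_div] at heven
  exact nonneg_of_mul_nonneg_right heven (by positivity)

variable {s : ℝ}

theorem continuous_cosKernel (hs : 0 < s) : Continuous (cosKernel · s) := by
  have him : 0 < (Complex.I * s).im := by simpa
  have hθ : Continuous fun a : ℝ ↦ jacobiTheta₂ a (Complex.I * s) :=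
    (continuous_iff_continuousAt.2 fun z ↦
      (differentiableAt_jacobiTheta₂_fst z him).continuousAt).comp Complex.continuous_ofReal
  refine continuous_coinduced_dom.2 ((Complex.continuous_re.comp hθ).congr fun a ↦ ?_)
  exact congr_arg Complex.re (cosKernel_def a s).symm

theorem hasSum_exp_smul_fourier_cosKernel (hs : 0 < s) :
    HasSum (fun n : ℤ ↦ (rexp (-π * n ^ 2 * s) : ℂ) • @fourier 1 n)
      ⟨fun a ↦ (cosKernel a s : ℂ), Complex.continuous_ofReal.comp (continuous_cosKernel hs)⟩ := by
  have hsummable : Summable fun n : ℤ ↦ (rexp (-π * n ^ 2 * s) : ℂ) • @fourier 1 n := by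
    refine .of_norm ?_
    simpa [norm_smul, fourier_norm, Complex.norm_real, -Complex.ofReal_exp] using
      (hasSum_int_evenKernel 0 hs).summable
  convert hsummable.hasSum using 1
  ext a
  induction a using QuotientAddGroup.induction_on with | H a =>
  refine (hasSum_int_cosKernel a hs).unique ?_
  convert ContinuousMap.hasSum_apply hsummable.hasSum (a : UnitAddCircle) using 2 with n
  rw [ContinuousMap.smul_apply, fourier_coe_apply, smul_eq_mul, mul_comm]
  congr 2
  push_cast
  ring

theorem fourierCoeff_cosKernel (hs : 0 < s) (n : ℤ) :
    fourierCoeff (fun a ↦ (cosKernel a s : ℂ)) n = rexp (-π * n ^ 2 * s) :=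
  congr_fun (fourierCoeff_eq_of_hasSum (hasSum_exp_smul_fourier_cosKernel hs)) n

/-- The heat measure on `ℝ / ℤ`: the probability measure with density `cosKernel · s`, for `0 < s`.
For the heat equation `∂ₜu = ∂ₓ²u` on `ℝ / 2πℤ`, the parameter `s` corresponds to time `t = π * s`.
The density is nonnegative, so no mass is lost in `ENNReal.ofReal`. -/
noncomputable def cosKernelMeasure (s : ℝ) : Measure UnitAddCircle :=
  AddCircle.haarAddCircle.withDensity fun a ↦ ENNReal.ofReal (cosKernel a s)

theorem integral_cosKernelMeasure {E : Type*} [NormedAddCommGroup E] [NormedSpace ℝ E]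
    (hs : 0 < s) (f : UnitAddCircle → E) :
    ∫ a, f a ∂cosKernelMeasure s = ∫ a : UnitAddCircle, cosKernel a s • f a := by
  rw [cosKernelMeasure, integral_withDensity_eq_integral_toReal_smul
    (continuous_cosKernel hs).measurable.ennreal_ofReal (by simp),
    AddCircle.integral_haarAddCircle, inv_one, one_smul]
  simp only [ENNReal.toReal_ofReal (cosKernel_nonneg _ s)]

theorem integral_fourier_cosKernelMeasure (hs : 0 < s) (n : ℤ) :
    ∫ a, fourier n a ∂cosKernelMeasure s = (rexp (-π * n ^ 2 * s) : ℂ) := by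
  have hcoeff := fourierCoeff_cosKernel hs (-n)
  rw [fourierCoeff, AddCircle.integral_haarAddCircle, inv_one, one_smul] at hcoeff
  simpa [integral_cosKernelMeasure hs, mul_comm] using hcoeff

theorem isProbabilityMeasure_cosKernelMeasure (hs : 0 < s) :
    IsProbabilityMeasure (cosKernelMeasure s) := by
  rw [isProbabilityMeasure_iff_real, ← Complex.ofReal_inj]
  simpa using integral_fourier_cosKernelMeasure hs 0

theorem tendsto_cosKernelMeasure :
    Tendsto (β := ProbabilityMeasure UnitAddCircle)
      (fun s : Set.Ioi (0 : ℝ) ↦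
        ⟨cosKernelMeasure s, isProbabilityMeasure_cosKernelMeasure s.2⟩)
      atBot (𝓝 ⟨Measure.dirac 0, inferInstance⟩) := by
  refine tendsto_probabilityMeasure_of_tendsto_integral_fourier fun n ↦ ?_
  simp only [ProbabilityMeasure.coe_mk, integral_dirac, fourier_eval_zero,
    fun s : Set.Ioi (0 : ℝ) ↦ integral_fourier_cosKernelMeasure s.2 n]
  refine (tendsto_comp_coe_Ioi_atBot
    (f := fun s : ℝ ↦ (rexp (-π * n ^ 2 * s) : ℂ))).2 (tendsto_nhdsWithin_of_tendsto_nhds ?_)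
  exact Continuous.tendsto' (by fun_prop) _ _ (by simp)

theorem tendsto_integral_cosKernel_mul (f : C(UnitAddCircle, ℝ)) :
    Tendsto (fun s ↦ ∫ a : UnitAddCircle, cosKernel a s * f a) (𝓝[>] 0) (𝓝 (f 0)) := by
  have hweak := ProbabilityMeasure.tendsto_iff_forall_integral_tendsto.1
    tendsto_cosKernelMeasure (mkOfCompact f)
  rw [← tendsto_comp_coe_Ioi_atBot]
  simpa only [ProbabilityMeasure.coe_mk, mkOfCompact_apply, integral_dirac, smul_eq_mul,
    fun s : Set.Ioi (0 : ℝ) ↦ integral_cosKernelMeasure s.2 f] using hweak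

end CosKernel

section HeatKernel

variable {t : ℝ}

theorem Φ_two_pi_mul (ht : 0 < t) (a : ℝ) :
    Φ t (2 * π * a) = (2 * π)⁻¹ * cosKernel a (t / π) := by
  have hterm (n : ℕ) : 2 * cos (2 * π * a * (n + 1)) * rexp (-π * (n + 1) ^ 2 * (t / π)) =
      2 * (rexp (-((n : ℝ) + 1) ^ 2 * t) * cos ((n + 1) * (2 * π * a))) := by
    have hexp : -π * ((n : ℝ) + 1) ^ 2 * (t / π) = -((n : ℝ) + 1) ^ 2 * t := by field_simp
    rw [hexp, mul_comm (2 * π * a)]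
    ring
  have hsum := (hasSum_nat_cosKernel₀ a (div_pos ht pi_pos)).tsum_eq
  simp only [hterm, tsum_mul_left] at hsum
  rw [eq_add_of_sub_eq' hsum.symm, Φ]
  ring

theorem intervalIntegral_Φ_mul (ht : 0 < t) (ψ : ℝ → ℝ) :
    ∫ x in (0 : ℝ)..(2 * π), Φ t x * ψ x =
      ∫ a in (0 : ℝ)..1, cosKernel a (t / π) * ψ (2 * π * a) := by
  have hscale := intervalIntegral.mul_integral_comp_mul_left (a := 0) (b := 1)
    (f := fun x ↦ Φ t x * ψ x) (c := 2 * π)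
  rw [mul_zero, mul_one] at hscale
  rw [← hscale, ← intervalIntegral.integral_const_mul]
  simp only [Φ_two_pi_mul ht, ← mul_assoc, mul_inv_cancel₀ two_pi_pos.ne', one_mul]

end HeatKernel

theorem statement_7_general (ψ : ℝ → ℝ) (hψ : Continuous ψ)
    (hper : ∀ x : ℝ, ψ (x + 2 * π) = ψ x) :
    Tendsto (fun t : ℝ ↦ ∫ x in (0 : ℝ)..(2 * π), Φ t x * ψ x) (𝓝[>] 0) (𝓝 (ψ 0)) := by
  have hper' : Function.Periodic (fun a ↦ ψ (2 * π * a)) 1 := fun a ↦ by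
    simpa only [mul_add, mul_one] using hper (2 * π * a)
  let f : C(UnitAddCircle, ℝ) := ⟨hper'.lift, continuous_coinduced_dom.2
    (show Continuous fun a ↦ ψ (2 * π * a) by fun_prop)⟩
  have hf (a : ℝ) : f a = ψ (2 * π * a) := hper'.lift_coe a
  have hf₀ : f 0 = ψ 0 := by simpa using hf 0
  have hscale : Tendsto (fun t ↦ t / π) (𝓝[>] 0) (𝓝[>] 0) := by
    have hcont : ContinuousWithinAt (fun t ↦ t / π) (Set.Ioi 0) 0 := by fun_prop
    have hmaps : Set.MapsTo (fun t ↦ t / π) (Set.Ioi 0) (Set.Ioi 0) :=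
      fun t ht ↦ div_pos ht pi_pos
    simpa only [zero_div] using hcont.tendsto_nhdsWithin hmaps
  refine hf₀ ▸ ((tendsto_integral_cosKernel_mul f).comp hscale).congr' ?_
  filter_upwards [self_mem_nhdsWithin] with t ht
  rw [Function.comp_apply, intervalIntegral_Φ_mul ht, ← UnitAddCircle.intervalIntegral_preimage 0,
    zero_add]
  simp only [hf]

/-- If `ψ : ℝ → ℝ` is `C²` and `2π`-periodic, then
`lim_{t→0⁺} ∫₀^{2π} Φ(t,x)·ψ(x) dx = ψ(0)`. -/
theorem statement_7 (ψ : ℝ → ℝ) (hψ : ContDiff ℝ 2 ψ) (hper : ∀ x : ℝ, ψ (x + 2 * π) = ψ x) :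
    Tendsto (fun t : ℝ => ∫ x in (0 : ℝ)..(2 * π), Φ t x * ψ x)
      (nhdsWithin 0 (Set.Ioi 0)) (nhds (ψ 0)) := by
  exact statement_7_general ψ hψ.continuous hper
end

section
/- If ψ : ℝ → ℝ is twice continuously differentiable and 2π-periodic, then for every t > 0 one has the quantitative estimate |ψ(0) − ∫₀^{2π} Φ(t,x)·ψ(x) dx| ≤ (1/π)·(∫₀^{2π} |ψ''(x)| dx)·∑_{n=1}^∞ (1/n²)·(1 − exp(−n²t)). -/
open MeasureTheory Real Filter

/-! Up to the common term `½ ∫ ψ`, both `π ψ(0)` and `π ∫ Φ(t, x) ψ(x) dx` are sums over `n ≥ 1` of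
the cosine coefficients `∫ cos(nx) ψ(x) dx`, with weights `1` and `exp(-n²t)` respectively.
Integrating by parts twice bounds the `n`-th coefficient by `n⁻² ∫ |ψ''|`, so the difference is
estimated term by term. For `ψ(0)` the expansion comes from integrating `ψ''` against
`∑ cos(nx) / n² = (x - π)² / 4 - π² / 12`: the jump of the derivative of this quadratic across a
period produces the value `ψ(0)`. -/

open scoped Interval

lemma periodic_deriv {𝕜 F : Type*} [NontriviallyNormedField 𝕜] [NormedAddCommGroup F]
    [NormedSpace 𝕜 F] {f : 𝕜 → F} {c : 𝕜} (hf : Function.Periodic f c) :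
    Function.Periodic (deriv f) c := fun x ↦ by
  rw [← deriv_comp_add_const, funext hf]

section IntegrationByParts

variable {𝕜 E : Type*} [NontriviallyNormedField 𝕜] [NormedAlgebra ℝ 𝕜] [NormedAddCommGroup E]
  [NormedSpace 𝕜 E] [NormedSpace ℝ E] [CompleteSpace E] [IsScalarTower ℝ 𝕜 E]

lemma integral_deriv_deriv_smul_eq_smul_deriv_deriv {a b : ℝ} {w w' w'' : ℝ → 𝕜}
    {f f' f'' : ℝ → E}
    (hw : ∀ x ∈ [[a, b]], HasDerivWithinAt w (w' x) [[a, b]] x)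
    (hw' : ∀ x ∈ [[a, b]], HasDerivWithinAt w' (w'' x) [[a, b]] x)
    (hw'' : IntervalIntegrable w'' volume a b)
    (hf : ∀ x ∈ [[a, b]], HasDerivWithinAt f (f' x) [[a, b]] x)
    (hf' : ∀ x ∈ [[a, b]], HasDerivWithinAt f' (f'' x) [[a, b]] x)
    (hf'' : IntervalIntegrable f'' volume a b) :
    ∫ x in a..b, w'' x • f x =
      (w' b • f b - w' a • f a) - (w b • f' b - w a • f' a) + ∫ x in a..b, w x • f'' x := by
  have hw'_int : IntervalIntegrable w' volume a b :=
    ContinuousOn.intervalIntegrable fun x hx ↦ (hw' x hx).continuousWithinAt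
  have hf'_int : IntervalIntegrable f' volume a b :=
    ContinuousOn.intervalIntegrable fun x hx ↦ (hf' x hx).continuousWithinAt
  rw [intervalIntegral.integral_smul_deriv_eq_deriv_smul_of_hasDerivWithinAt hw hf' hw'_int hf'',
    intervalIntegral.integral_smul_deriv_eq_deriv_smul_of_hasDerivWithinAt hw' hf hw'' hf'_int]
  abel

end IntegrationByParts

section CosineCoefficients

variable {E : Type*} [NormedAddCommGroup E] [NormedSpace ℝ E]

/-- The `n`-th cosine coefficient of `f` over the period `[0, 2π]`. It is not normalised: the
coefficient of `cos (n x)` in the Fourier series of `f` is `π⁻¹ • cosCoeff f n` for `n ≠ 0`. -/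
noncomputable def cosCoeff (f : ℝ → E) (n : ℕ) : E :=
  ∫ x in (0 : ℝ)..(2 * π), cos (n * x) • f x

lemma norm_cosCoeff_le {f : ℝ → E} (hf : IntervalIntegrable f volume 0 (2 * π)) (n : ℕ) :
    ‖cosCoeff f n‖ ≤ ∫ x in (0 : ℝ)..(2 * π), ‖f x‖ := by
  refine intervalIntegral.norm_integral_le_of_norm_le two_pi_pos.le
    (Eventually.of_forall fun x _ ↦ ?_) hf.norm
  rw [norm_smul]
  exact mul_le_of_le_one_left (norm_nonneg _) (abs_cos_le_one _)

lemma hasSum_smul_cosCoeff {ι : Type*} [Countable ι] {b : ι → ℝ} (hb : Summable b) {k : ι → ℕ}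
    {S : ℝ → ℝ} (hS : ∀ x ∈ Set.Icc 0 (2 * π), HasSum (fun i ↦ b i * cos (k i * x)) (S x))
    {f : ℝ → E} (hf : IntervalIntegrable f volume 0 (2 * π)) :
    HasSum (fun i ↦ b i • cosCoeff f (k i)) (∫ x in (0 : ℝ)..(2 * π), S x • f x) := by
  simp only [cosCoeff, ← intervalIntegral.integral_smul, smul_smul]
  refine intervalIntegral.hasSum_integral_of_dominated_convergence (fun i x ↦ ‖b i‖ * ‖f x‖)
    (fun i ↦ ?_) (fun i ↦ Eventually.of_forall fun x _ ↦ ?_)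
    (Eventually.of_forall fun x _ ↦ hb.norm.mul_right _) ?_
    (Eventually.of_forall fun x hx ↦ ?_)
  · exact (by fun_prop : Continuous fun x ↦ b i * cos (k i * x)).aestronglyMeasurable.smul
      hf.aestronglyMeasurable_restrict_uIoc
  · rw [norm_smul, norm_mul]
    gcongr
    exact mul_le_of_le_one_right (norm_nonneg _) (abs_cos_le_one _)
  · simpa only [tsum_mul_right] using hf.norm.const_mul (∑' i, ‖b i‖)
  · rw [Set.uIoc_of_le two_pi_pos.le] at hx
    exact (hS x (Set.Ioc_subset_Icc_self hx)).smul_const (f x)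

end CosineCoefficients

section CosineSeries

lemma summable_one_div_nat_add_one_sq : Summable fun n : ℕ ↦ 1 / ((n : ℝ) + 1) ^ 2 := by
  simpa using (summable_nat_add_iff 1).2 (Real.summable_one_div_nat_pow.2 one_lt_two)

lemma hasSum_one_div_nat_add_one_sq_mul_cos {x : ℝ} (hx : x ∈ Set.Icc 0 (2 * π)) :
    HasSum (fun n : ℕ ↦ 1 / ((n : ℝ) + 1) ^ 2 * cos ((n + 1 : ℕ) * x))
      ((x - π) ^ 2 / 4 - π ^ 2 / 12) := by
  have hx' : x / (2 * π) ∈ Set.Icc (0 : ℝ) 1 :=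
    ⟨div_nonneg hx.1 two_pi_pos.le, (div_le_one two_pi_pos).2 hx.2⟩
  have hsum := (hasSum_nat_add_iff' 1).2 (hasSum_one_div_nat_pow_mul_cos one_ne_zero hx')
  rw [mul_one, ← bernoulliFun, bernoulliFun_two] at hsum
  convert! hsum using 1
  · ext n
    push_cast
    congr 2
    field_simp
  · simp only [Finset.range_one, Finset.sum_singleton, Nat.cast_zero, Nat.factorial]
    field_simp
    ring

lemma summable_exp_neg_nat_add_one_sq_mul {t : ℝ} (ht : 0 < t) :
    Summable fun n : ℕ ↦ exp (-((n : ℝ) + 1) ^ 2 * t) := by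
  refine (summable_exp_nat_mul_of_ge (neg_neg_of_pos ht) (f := fun n ↦ ((n : ℝ) + 1) ^ 2)
    fun n ↦ ?_).congr fun n ↦ by ring_nf
  nlinarith [n.cast_nonneg (α := ℝ)]

lemma one_sub_exp_neg_nat_add_one_sq_mul_nonneg {t : ℝ} (ht : 0 ≤ t) (n : ℕ) :
    0 ≤ 1 - exp (-((n : ℝ) + 1) ^ 2 * t) := by
  rw [sub_nonneg, exp_le_one_iff, neg_mul, neg_nonpos]
  positivity

lemma summable_one_div_nat_add_one_sq_mul_one_sub_exp {t : ℝ} (ht : 0 ≤ t) :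
    Summable fun n : ℕ ↦ 1 / ((n : ℝ) + 1) ^ 2 * (1 - exp (-((n : ℝ) + 1) ^ 2 * t)) :=
  summable_one_div_nat_add_one_sq.of_nonneg_of_le
    (fun n ↦ mul_nonneg (by positivity) (one_sub_exp_neg_nat_add_one_sq_mul_nonneg ht n))
    fun _ ↦ mul_le_of_le_one_right (by positivity) (sub_le_self 1 (exp_nonneg _))

end CosineSeries

section HeatKernel

variable {t : ℝ}

lemma norm_exp_mul_cos_le (a b : ℝ) : ‖exp a * cos b‖ ≤ exp a := by
  rw [norm_mul, norm_of_nonneg (exp_nonneg _)]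
  exact mul_le_of_le_one_right (exp_nonneg _) (abs_cos_le_one _)

lemma continuous_Φ (ht : 0 < t) : Continuous (Φ t) :=
  continuous_const.add <| continuous_const.mul <|
    continuous_tsum (fun n ↦ by fun_prop) (summable_exp_neg_nat_add_one_sq_mul ht)
      fun _ _ ↦ norm_exp_mul_cos_le _ _

lemma hasSum_Φ (ht : 0 < t) (x : ℝ) :
    HasSum (fun n : ℕ ↦ exp (-((n : ℝ) + 1) ^ 2 * t) * cos ((n + 1 : ℕ) * x))
      (π * Φ t x - 1 / 2) := by
  obtain ⟨S, hS⟩ := (summable_exp_neg_nat_add_one_sq_mul ht).of_norm_bounded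
    fun n ↦ norm_exp_mul_cos_le _ (((n : ℝ) + 1) * x)
  have hΦ : π * Φ t x - 1 / 2 = S := by
    rw [Φ, hS.tsum_eq]
    field_simp
    ring
  simpa only [hΦ, Nat.cast_succ] using hS

lemma hasSum_exp_smul_cosCoeff {E : Type*} [NormedAddCommGroup E] [NormedSpace ℝ E] {f : ℝ → E}
    (ht : 0 < t) (hf : IntervalIntegrable f volume 0 (2 * π)) :
    HasSum (fun n : ℕ ↦ exp (-((n : ℝ) + 1) ^ 2 * t) • cosCoeff f (n + 1))
      (π • (∫ x in (0 : ℝ)..(2 * π), Φ t x • f x) -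
        (1 / 2 : ℝ) • ∫ x in (0 : ℝ)..(2 * π), f x) := by
  have hΦf : IntervalIntegrable (fun x ↦ Φ t x • f x) volume 0 (2 * π) :=
    hf.continuousOn_smul (continuous_Φ ht).continuousOn
  convert! hasSum_smul_cosCoeff (summable_exp_neg_nat_add_one_sq_mul ht)
    (fun x _ ↦ hasSum_Φ ht x) hf using 1
  simp only [sub_smul, mul_smul, ← intervalIntegral.integral_smul]
  exact (intervalIntegral.integral_sub (hΦf.smul π) (hf.smul (1 / 2 : ℝ))).symm

end HeatKernel

section PeriodicFunctions

variable {E : Type*} [NormedAddCommGroup E] [NormedSpace ℝ E] [CompleteSpace E]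
  {ψ ψ' ψ'' : ℝ → E} {t : ℝ}

lemma cosCoeff_eq_neg_cosCoeff_deriv_deriv
    (hψ : ∀ x ∈ [[0, 2 * π]], HasDerivWithinAt ψ (ψ' x) [[0, 2 * π]] x)
    (hψ' : ∀ x ∈ [[0, 2 * π]], HasDerivWithinAt ψ' (ψ'' x) [[0, 2 * π]] x)
    (hψ'' : IntervalIntegrable ψ'' volume 0 (2 * π)) (hper' : ψ' (2 * π) = ψ' 0)
    {n : ℕ} (hn : n ≠ 0) :
    cosCoeff ψ n = -((1 / (n : ℝ) ^ 2) • cosCoeff ψ'' n) := by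
  have hmul (x : ℝ) : HasDerivAt (fun x : ℝ ↦ n * x) n x := by
    simpa using (hasDerivAt_id x).const_mul (n : ℝ)
  have hcos (x : ℝ) : HasDerivAt (fun x ↦ -(1 / (n : ℝ) ^ 2) * cos (n * x))
      (1 / n * sin (n * x)) x := by
    convert! (hmul x).cos.const_mul (-(1 / (n : ℝ) ^ 2)) using 1
    field_simp
  have hsin (x : ℝ) : HasDerivAt (fun x ↦ 1 / (n : ℝ) * sin (n * x)) (cos (n * x)) x := by
    convert! (hmul x).sin.const_mul (1 / (n : ℝ)) using 1
    field_simp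
  have hsin_period : sin (n * (2 * π)) = 0 := by
    simpa using sin_periodic.nat_mul_eq n
  rw [cosCoeff, integral_deriv_deriv_smul_eq_smul_deriv_deriv
    (fun x _ ↦ (hcos x).hasDerivWithinAt) (fun x _ ↦ (hsin x).hasDerivWithinAt)
    ((by fun_prop : Continuous fun x ↦ cos (n * x)).intervalIntegrable _ _) hψ hψ' hψ'']
  simp [hper', hsin_period, cos_nat_mul_two_pi, mul_smul, cosCoeff]

lemma hasSum_cosCoeff
    (hψ : ∀ x ∈ [[0, 2 * π]], HasDerivWithinAt ψ (ψ' x) [[0, 2 * π]] x)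
    (hψ' : ∀ x ∈ [[0, 2 * π]], HasDerivWithinAt ψ' (ψ'' x) [[0, 2 * π]] x)
    (hψ'' : IntervalIntegrable ψ'' volume 0 (2 * π))
    (hper : ψ (2 * π) = ψ 0) (hper' : ψ' (2 * π) = ψ' 0) :
    HasSum (fun n : ℕ ↦ cosCoeff ψ (n + 1))
      (π • ψ 0 - (1 / 2 : ℝ) • ∫ x in (0 : ℝ)..(2 * π), ψ x) := by
  have hquad (x : ℝ) :
      HasDerivAt (fun x ↦ (x - π) ^ 2 / 4 - π ^ 2 / 12) ((x - π) / 2) x := by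
    convert! ((((hasDerivAt_id x).sub_const π).pow 2).div_const 4).sub_const (π ^ 2 / 12) using 1
    simp only [id]
    ring
  have hlin (x : ℝ) : HasDerivAt (fun x ↦ (x - π) / 2) (1 / 2) x :=
    ((hasDerivAt_id x).sub_const π).div_const 2
  have hgreen := integral_deriv_deriv_smul_eq_smul_deriv_deriv
    (fun x _ ↦ (hquad x).hasDerivWithinAt) (fun x _ ↦ (hlin x).hasDerivWithinAt)
    intervalIntegrable_const hψ hψ' hψ''
  rw [intervalIntegral.integral_smul] at hgreen
  have hsum := (hasSum_smul_cosCoeff summable_one_div_nat_add_one_sq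
    (fun _ ↦ hasSum_one_div_nat_add_one_sq_mul_cos) hψ'').neg
  convert! hsum using 1
  · ext n
    simpa using cosCoeff_eq_neg_cosCoeff_deriv_deriv hψ hψ' hψ'' hper' n.succ_ne_zero
  · rw [hgreen, hper, hper']
    module

lemma norm_cosCoeff_le_integral_norm_deriv_deriv
    (hψ : ∀ x ∈ [[0, 2 * π]], HasDerivWithinAt ψ (ψ' x) [[0, 2 * π]] x)
    (hψ' : ∀ x ∈ [[0, 2 * π]], HasDerivWithinAt ψ' (ψ'' x) [[0, 2 * π]] x)
    (hψ'' : IntervalIntegrable ψ'' volume 0 (2 * π)) (hper' : ψ' (2 * π) = ψ' 0)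
    {n : ℕ} (hn : n ≠ 0) :
    ‖cosCoeff ψ n‖ ≤ 1 / (n : ℝ) ^ 2 * ∫ x in (0 : ℝ)..(2 * π), ‖ψ'' x‖ := by
  rw [cosCoeff_eq_neg_cosCoeff_deriv_deriv hψ hψ' hψ'' hper' hn, norm_neg, norm_smul,
    norm_of_nonneg (by positivity)]
  gcongr
  exact norm_cosCoeff_le hψ'' n

theorem statement_8_general
    (hψ : ∀ x ∈ [[0, 2 * π]], HasDerivWithinAt ψ (ψ' x) [[0, 2 * π]] x)
    (hψ' : ∀ x ∈ [[0, 2 * π]], HasDerivWithinAt ψ' (ψ'' x) [[0, 2 * π]] x)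
    (hψ'' : IntervalIntegrable ψ'' volume 0 (2 * π))
    (hper : ψ (2 * π) = ψ 0) (hper' : ψ' (2 * π) = ψ' 0) (ht : 0 < t) :
    ‖ψ 0 - ∫ x in (0 : ℝ)..(2 * π), Φ t x • ψ x‖
      ≤ (1 / π) * (∫ x in (0 : ℝ)..(2 * π), ‖ψ'' x‖) *
          ∑' n : ℕ, (1 / ((n : ℝ) + 1) ^ 2) * (1 - exp (-((n : ℝ) + 1) ^ 2 * t)) := by
  have hψ_int : IntervalIntegrable ψ volume 0 (2 * π) :=
    ContinuousOn.intervalIntegrable fun x hx ↦ (hψ x hx).continuousWithinAt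
  have hsum : HasSum (fun n : ℕ ↦ (1 - exp (-((n : ℝ) + 1) ^ 2 * t)) • cosCoeff ψ (n + 1))
      (π • (ψ 0 - ∫ x in (0 : ℝ)..(2 * π), Φ t x • ψ x)) := by
    convert! (hasSum_cosCoeff hψ hψ' hψ'' hper hper').sub (hasSum_exp_smul_cosCoeff ht hψ_int)
      using 1
    · ext n
      rw [sub_smul, one_smul]
    · module
  have hterm (n : ℕ) : ‖(1 - exp (-((n : ℝ) + 1) ^ 2 * t)) • cosCoeff ψ (n + 1)‖ ≤
      (∫ x in (0 : ℝ)..(2 * π), ‖ψ'' x‖) *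
        (1 / ((n : ℝ) + 1) ^ 2 * (1 - exp (-((n : ℝ) + 1) ^ 2 * t))) := by
    have hweight := one_sub_exp_neg_nat_add_one_sq_mul_nonneg ht.le n
    have hcoeff := norm_cosCoeff_le_integral_norm_deriv_deriv hψ hψ' hψ'' hper' n.succ_ne_zero
    rw [Nat.cast_succ] at hcoeff
    rw [norm_smul, norm_of_nonneg hweight, ← mul_assoc, mul_comm]
    gcongr
    rwa [mul_comm]
  have hnorm := hsum.norm_le_of_bounded
    ((summable_one_div_nat_add_one_sq_mul_one_sub_exp ht.le).mul_left _).hasSum hterm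
  rw [norm_smul, norm_of_nonneg pi_pos.le, tsum_mul_left] at hnorm
  rwa [mul_assoc, one_div_mul_eq_div, le_div_iff₀' pi_pos]

end PeriodicFunctions

/-- Quantitative estimate: if `ψ : ℝ → ℝ` is `C²` and `2π`-periodic, then for every `t > 0`,
`|ψ(0) − ∫₀^{2π} Φ(t,x)·ψ(x) dx| ≤ (1/π)·(∫₀^{2π} |ψ''(x)| dx)·∑_{n=1}^∞ (1/n²)·(1 − exp(−n²t))`. -/
theorem statement_8 (ψ : ℝ → ℝ) (hψ : ContDiff ℝ 2 ψ) (hper : ∀ x : ℝ, ψ (x + 2 * π) = ψ x) :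
    ∀ t : ℝ, 0 < t →
      |ψ 0 - ∫ x in (0 : ℝ)..(2 * π), Φ t x * ψ x|
        ≤ (1 / π) * (∫ x in (0 : ℝ)..(2 * π), |deriv (deriv ψ) x|) *
            ∑' n : ℕ, (1 / ((n : ℝ) + 1) ^ 2) * (1 - Real.exp (-((n : ℝ) + 1) ^ 2 * t)) := by
  intro t ht
  exact statement_8_general
    (fun x _ ↦ (hψ.differentiable two_ne_zero x).hasDerivAt.hasDerivWithinAt)
    (fun x _ ↦ (hψ.differentiable_deriv_two x).hasDerivAt.hasDerivWithinAt)
    ((hψ.deriv' (n := 1)).continuous_deriv_one.intervalIntegrable _ _)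
    (Function.Periodic.eq hper) (periodic_deriv hper).eq ht
end
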